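/- Let d ≥ 1, let b : (0,1) × ℝ^d → ℝ^d be continuously differentiable, let ρ : (0,1) × ℝ^d → ℝ be continuously differentiable, strictly positive, and satisfy the continuity equation ∂_t ρ(t,x) + ∇·(b(t,·) ρ(t,·))(x) = 0 for all t, x. Let r : (0,1) × ℝ^d → ℝ be such that x ↦ r(t,x) is twice continuously differentiable and (t,x) ↦ r(t,x) is continuously differentiable, let F : (0,1) → ℝ be differentiable, let χ : (0,1) → ℝ, and define s(t,x) = ∇_x (log ρ(t,·))(x), the tilted density ρ̂(t,x) = ρ(t,x) · exp(r(t,x) + F(t)), and the modified drift b̃(t,x) = b(t,x) + χ(t) · ∇_x r(t,·)(x). Then for all t ∈ (0,1) and x ∈ ℝ^d: ∂_t ρ̂(t,x) + ∇·(b̃(t,·) ρ̂(t,·))(x) = (⟪b(t,x), ∇_x r(t,·)(x)⟫ + ∂_t r(t,x) + χ(t) · (‖∇_x r(t,·)(x)‖² + Δ_x r(t,·)(x) + ⟪∇_x r(t,·)(x), s(t,x)⟫) + F'(t)) · ρ̂(t,x). -/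

import Mathlib

/-!
Put `φ = r + F`, so that `ρ̂ = ρ e^φ` and `∇φ = ∇r`. By the Leibniz rule, the continuity operator
`∂ₜ · + ∇·(b ·)` sends `ρ e^φ` to `e^φ` times its value on `ρ`, plus `(∂ₜφ + ⟪b, ∇φ⟫) ρ e^φ`; the
first part vanishes by the continuity equation. The extra drift `χ∇φ` contributes `χ ∇·(ρ̂ ∇φ)`,
which is `χ ρ̂ (Δφ + ⟪∇ log ρ̂, ∇φ⟫)` with `∇ log ρ̂ = ∇ log ρ + ∇φ`.
-/

open Set
open scoped RealInnerProductSpace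

noncomputable section

/-- Divergence of a vector field: the trace of its Fréchet derivative. -/
def div' {d : ℕ} (v : EuclideanSpace ℝ (Fin d) → EuclideanSpace ℝ (Fin d))
    (x : EuclideanSpace ℝ (Fin d)) : ℝ :=
  LinearMap.trace ℝ (EuclideanSpace ℝ (Fin d)) (fderiv ℝ v x).toLinearMap

/-- Laplacian of a scalar function: the divergence of its gradient. -/
def lap {d : ℕ} (f : EuclideanSpace ℝ (Fin d) → ℝ) (x : EuclideanSpace ℝ (Fin d)) : ℝ :=
  div' (fun y => gradient f y) x

open scoped Gradient

section Divergence

variable {𝕜 E : Type*} [NontriviallyNormedField 𝕜] [NormedAddCommGroup E] [NormedSpace 𝕜 E]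

variable (𝕜) in
/-- The divergence of a vector field on a normed space, as the trace of its Fréchet derivative.
On `EuclideanSpace ℝ (Fin d)` this unfolds to `div'`. It is `0` where the field is not
differentiable, and identically `0` if the space is infinite-dimensional. -/
def divergence (v : E → E) (x : E) : 𝕜 :=
  LinearMap.trace 𝕜 E (fderiv 𝕜 v x).toLinearMap

theorem divergence_add {u v : E → E} {x : E}
    (hu : DifferentiableAt 𝕜 u x) (hv : DifferentiableAt 𝕜 v x) :
    divergence 𝕜 (fun y => u y + v y) x = divergence 𝕜 u x + divergence 𝕜 v x := by
  simp only [divergence, fderiv_fun_add hu hv, ContinuousLinearMap.toLinearMap_add, map_add]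

theorem divergence_smul [CompleteSpace 𝕜] [FiniteDimensional 𝕜 E] {f : E → 𝕜} {v : E → E} {x : E}
    (hf : DifferentiableAt 𝕜 f x) (hv : DifferentiableAt 𝕜 v x) :
    divergence 𝕜 (fun y => f y • v y) x = f x * divergence 𝕜 v x + fderiv 𝕜 f x (v x) := by
  have trace_rankOne : LinearMap.trace 𝕜 E ((fderiv 𝕜 f x).smulRight (v x)).toLinearMap
      = fderiv 𝕜 f x (v x) := LinearMap.trace_smulRight _ _
  simp only [divergence, fderiv_fun_smul hf hv, ContinuousLinearMap.toLinearMap_add,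
    ContinuousLinearMap.toLinearMap_smul, map_add, map_smul, smul_eq_mul, trace_rankOne]

theorem divergence_const_smul (c : 𝕜) {v : E → E} {x : E} (hv : DifferentiableAt 𝕜 v x) :
    divergence 𝕜 (fun y => c • v y) x = c * divergence 𝕜 v x := by
  simp only [divergence, fderiv_fun_const_smul hv, ContinuousLinearMap.toLinearMap_smul, map_smul,
    smul_eq_mul]

end Divergence

section ContinuityResidual

variable {E : Type*} [NormedAddCommGroup E] [NormedSpace ℝ E]

/-- The left-hand side `∂ₜρ + ∇·(ρ b)` of the continuity equation for a density `ρ` transported by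
a drift `b`; the equation holds at `(t, x)` when this vanishes. -/
def continuityResidual (b : ℝ → E → E) (ρ : ℝ → E → ℝ) (t : ℝ) (x : E) : ℝ :=
  deriv (fun τ => ρ τ x) t + divergence ℝ (fun y => ρ t y • b t y) x

theorem continuityResidual_add_drift {b u : ℝ → E → E} {ρ : ℝ → E → ℝ} {t : ℝ} {x : E}
    (hb : DifferentiableAt ℝ (b t) x) (hu : DifferentiableAt ℝ (u t) x)
    (hρx : DifferentiableAt ℝ (ρ t) x) :
    continuityResidual (fun τ y => b τ y + u τ y) ρ t x
      = continuityResidual b ρ t x + divergence ℝ (fun y => ρ t y • u t y) x := by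
  simp only [continuityResidual, smul_add, add_assoc,
    divergence_add (hρx.fun_smul hb) (hρx.fun_smul hu)]

end ContinuityResidual

section Slices

variable {𝕜 E F G : Type*} [NontriviallyNormedField 𝕜] [NormedAddCommGroup E] [NormedSpace 𝕜 E]
  [NormedAddCommGroup F] [NormedSpace 𝕜 F] [NormedAddCommGroup G] [NormedSpace 𝕜 G]
  {f : E → F → G} {a : E} {x : F}

theorem differentiableAt_slice_left
    (hf : DifferentiableAt 𝕜 (fun p : E × F => f p.1 p.2) (a, x)) :
    DifferentiableAt 𝕜 (fun e => f e x) a :=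
  hf.comp (f := fun e => (e, x)) a (by fun_prop)

theorem differentiableAt_slice_right
    (hf : DifferentiableAt 𝕜 (fun p : E × F => f p.1 p.2) (a, x)) :
    DifferentiableAt 𝕜 (f a) x :=
  hf.comp x (by fun_prop)

end Slices

section Gradient

variable {E : Type*} [NormedAddCommGroup E] [InnerProductSpace ℝ E] [CompleteSpace E]
  {f g : E → ℝ} {x : E}

theorem gradient_add_const (f : E → ℝ) (c : ℝ) : ∇ (fun y => f y + c) = ∇ f := by
  funext x
  simp only [gradient, fderiv_add_const]

theorem gradient_mul (hf : DifferentiableAt ℝ f x) (hg : DifferentiableAt ℝ g x) :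
    ∇ (fun y => f y * g y) x = f x • ∇ g x + g x • ∇ f x := by
  simp only [gradient, fderiv_fun_mul hf hg, map_add, map_smul]

theorem gradient_exp (hf : DifferentiableAt ℝ f x) :
    ∇ (fun y => Real.exp (f y)) x = Real.exp (f x) • ∇ f x := by
  simp only [gradient, fderiv_exp hf, map_smul]

theorem gradient_log (hf : DifferentiableAt ℝ f x) (hfx : f x ≠ 0) :
    ∇ (fun y => Real.log (f y)) x = (f x)⁻¹ • ∇ f x := by
  simp only [gradient, fderiv.log hf hfx, map_smul]

theorem gradient_log_mul_exp (hf : DifferentiableAt ℝ f x) (hfx : f x ≠ 0)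
    (hg : DifferentiableAt ℝ g x) :
    ∇ (fun y => Real.log (f y * Real.exp (g y))) x = ∇ (fun y => Real.log (f y)) x + ∇ g x := by
  rw [gradient_log (hf.fun_mul hg.exp) (mul_ne_zero hfx (Real.exp_ne_zero _)),
    gradient_mul hf hg.exp, gradient_exp hg, gradient_log hf hfx]
  match_scalars <;> field_simp [Real.exp_ne_zero]

theorem differentiableAt_gradient (hf : ContDiffAt ℝ 2 f x) : DifferentiableAt ℝ (∇ f) x :=
  (InnerProductSpace.toDual ℝ E).symm.toContinuousLinearEquiv.differentiableAt.comp x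
    ((hf.fderiv_right (m := 1) (by norm_num)).differentiableAt one_ne_zero)

end Gradient

section TiltedDensity

variable {E : Type*} [NormedAddCommGroup E] [InnerProductSpace ℝ E] [FiniteDimensional ℝ E]

theorem divergence_smul_eq_mul_add_inner_gradient_log {f : E → ℝ} {v : E → E} {x : E}
    (hf : DifferentiableAt ℝ f x) (hfx : f x ≠ 0) (hv : DifferentiableAt ℝ v x) :
    divergence ℝ (fun y => f y • v y) x
      = f x * (divergence ℝ v x + ⟪∇ (fun y => Real.log (f y)) x, v x⟫) := by
  rw [divergence_smul hf hv, gradient_log hf hfx, real_inner_smul_left, inner_gradient_left]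
  field_simp

variable {b : ℝ → E → E} {ρ g φ : ℝ → E → ℝ} {t : ℝ} {x : E}

theorem continuityResidual_mul (hb : DifferentiableAt ℝ (b t) x)
    (hρt : DifferentiableAt ℝ (fun τ => ρ τ x) t) (hρx : DifferentiableAt ℝ (ρ t) x)
    (hgt : DifferentiableAt ℝ (fun τ => g τ x) t) (hgx : DifferentiableAt ℝ (g t) x) :
    continuityResidual b (fun τ y => ρ τ y * g τ y) t x
      = g t x * continuityResidual b ρ t x
        + ρ t x * (⟪b t x, ∇ (g t) x⟫ + deriv (fun τ => g τ x) t) := by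
  have div_split : divergence ℝ (fun y => (ρ t y * g t y) • b t y) x
      = g t x * divergence ℝ (fun y => ρ t y • b t y) x + ρ t x * ⟪b t x, ∇ (g t) x⟫ := by
    simp only [mul_comm (ρ t _) (g t _), mul_smul]
    rw [divergence_smul hgx (hρx.fun_smul hb), map_smul, smul_eq_mul, real_inner_comm,
      inner_gradient_left]
  simp only [continuityResidual, deriv_fun_mul hρt hgt, div_split]
  ring

theorem continuityResidual_mul_exp (hb : DifferentiableAt ℝ (b t) x)
    (hρt : DifferentiableAt ℝ (fun τ => ρ τ x) t) (hρx : DifferentiableAt ℝ (ρ t) x)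
    (hφt : DifferentiableAt ℝ (fun τ => φ τ x) t) (hφx : DifferentiableAt ℝ (φ t) x) :
    continuityResidual b (fun τ y => ρ τ y * Real.exp (φ τ y)) t x
      = Real.exp (φ t x) * continuityResidual b ρ t x
        + (⟪b t x, ∇ (φ t) x⟫ + deriv (fun τ => φ τ x) t) * (ρ t x * Real.exp (φ t x)) := by
  rw [continuityResidual_mul hb hρt hρx hφt.exp hφx.exp, gradient_exp hφx, deriv_exp hφt,
    real_inner_smul_right]
  ring

theorem divergence_mul_exp_smul_gradient {f g : E → ℝ} (hf : DifferentiableAt ℝ f x)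
    (hfx : f x ≠ 0) (hg : DifferentiableAt ℝ g x) (hgrad : DifferentiableAt ℝ (∇ g) x) :
    divergence ℝ (fun y => (f y * Real.exp (g y)) • ∇ g y) x
      = (‖∇ g x‖ ^ 2 + divergence ℝ (∇ g) x + ⟪∇ g x, ∇ (fun y => Real.log (f y)) x⟫)
        * (f x * Real.exp (g x)) := by
  rw [divergence_smul_eq_mul_add_inner_gradient_log (hf.fun_mul hg.exp)
      (mul_ne_zero hfx (Real.exp_ne_zero _)) hgrad,
    gradient_log_mul_exp hf hfx hg, inner_add_left, real_inner_self_eq_norm_sq,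
    real_inner_comm (∇ g x)]
  ring

theorem tilted_continuity_equation_modified_drift_general (χ : ℝ → ℝ) (hρpos : 0 < ρ t x)
    (hb : DifferentiableAt ℝ (b t) x)
    (hρt : DifferentiableAt ℝ (fun τ => ρ τ x) t) (hρx : DifferentiableAt ℝ (ρ t) x)
    (hφt : DifferentiableAt ℝ (fun τ => φ τ x) t) (hφx : DifferentiableAt ℝ (φ t) x)
    (hgrad : DifferentiableAt ℝ (∇ (φ t)) x) :
    continuityResidual (fun τ y => b τ y + χ τ • ∇ (φ τ) y)
        (fun τ y => ρ τ y * Real.exp (φ τ y)) t x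
      = Real.exp (φ t x) * continuityResidual b ρ t x
        + (⟪b t x, ∇ (φ t) x⟫ + deriv (fun τ => φ τ x) t
          + χ t * (‖∇ (φ t) x‖ ^ 2 + divergence ℝ (∇ (φ t)) x
            + ⟪∇ (φ t) x, ∇ (fun y => Real.log (ρ t y)) x⟫)) * (ρ t x * Real.exp (φ t x)) := by
  have hρhat : DifferentiableAt ℝ (fun y => ρ t y * Real.exp (φ t y)) x := hρx.fun_mul hφx.exp
  rw [continuityResidual_add_drift hb (hgrad.fun_const_smul (χ t)) hρhat,
    continuityResidual_mul_exp hb hρt hρx hφt hφx]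
  simp only [smul_comm _ (χ t)]
  rw [divergence_const_smul (χ t) (hρhat.fun_smul hgrad),
    divergence_mul_exp_smul_gradient hρx hρpos.ne' hφx hgrad]
  ring

end TiltedDensity

theorem tilted_continuity_equation_modified_drift
    (d : ℕ) (hd : 1 ≤ d)
    (b : ℝ → EuclideanSpace ℝ (Fin d) → EuclideanSpace ℝ (Fin d))
    (ρ r : ℝ → EuclideanSpace ℝ (Fin d) → ℝ)
    (F χ : ℝ → ℝ)
    (s btilde : ℝ → EuclideanSpace ℝ (Fin d) → EuclideanSpace ℝ (Fin d))
    (ρhat : ℝ → EuclideanSpace ℝ (Fin d) → ℝ)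
    (hb : ContDiffOn ℝ 1 (fun p : ℝ × EuclideanSpace ℝ (Fin d) => b p.1 p.2)
      (Ioo (0:ℝ) 1 ×ˢ univ))
    (hρ : ContDiffOn ℝ 1 (fun p : ℝ × EuclideanSpace ℝ (Fin d) => ρ p.1 p.2)
      (Ioo (0:ℝ) 1 ×ˢ univ))
    (hρpos : ∀ t ∈ Ioo (0:ℝ) 1, ∀ x, 0 < ρ t x)
    (hce : ∀ t ∈ Ioo (0:ℝ) 1, ∀ x,
      deriv (fun τ => ρ τ x) t + div' (fun y => ρ t y • b t y) x = 0)
    (hrx : ∀ t ∈ Ioo (0:ℝ) 1, ContDiff ℝ 2 (r t))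
    (hr : ContDiffOn ℝ 1 (fun p : ℝ × EuclideanSpace ℝ (Fin d) => r p.1 p.2)
      (Ioo (0:ℝ) 1 ×ˢ univ))
    (hF : DifferentiableOn ℝ F (Ioo (0:ℝ) 1))
    (hs : ∀ t x, s t x = gradient (fun y => Real.log (ρ t y)) x)
    (hρhat : ∀ t x, ρhat t x = ρ t x * Real.exp (r t x + F t))
    (hbtilde : ∀ t x, btilde t x = b t x + χ t • gradient (r t) x) :
    ∀ t ∈ Ioo (0:ℝ) 1, ∀ x,
      deriv (fun τ => ρhat τ x) t + div' (fun y => ρhat t y • btilde t y) x =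
        (⟪b t x, gradient (r t) x⟫ + deriv (fun τ => r τ x) t
          + χ t * (‖gradient (r t) x‖ ^ 2 + lap (r t) x + ⟪gradient (r t) x, s t x⟫)
          + deriv F t) * ρhat t x := by
  obtain rfl : s = fun t => ∇ (fun y => Real.log (ρ t y)) := funext₂ hs
  obtain rfl : ρhat = fun t x => ρ t x * Real.exp (r t x + F t) := funext₂ hρhat
  obtain rfl : btilde = fun t x => b t x + χ t • ∇ (r t) x := funext₂ hbtilde
  intro t ht x
  have hnhds : Ioo (0 : ℝ) 1 ×ˢ univ ∈ nhds (t, x) :=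
    prod_mem_nhds (isOpen_Ioo.mem_nhds ht) Filter.univ_mem
  have hb' := (hb.contDiffAt hnhds).differentiableAt one_ne_zero
  have hρ' := (hρ.contDiffAt hnhds).differentiableAt one_ne_zero
  have hr' := (hr.contDiffAt hnhds).differentiableAt one_ne_zero
  have hrt := differentiableAt_slice_left hr'
  have hFt : DifferentiableAt ℝ F t := hF.differentiableAt (isOpen_Ioo.mem_nhds ht)
  have hres : continuityResidual b ρ t x = 0 := hce t ht x
  have key := tilted_continuity_equation_modified_drift_general (φ := fun τ y => r τ y + F τ) χ
    (hρpos t ht x) (differentiableAt_slice_right hb') (differentiableAt_slice_left hρ')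
    (differentiableAt_slice_right hρ') (hrt.add hFt)
    ((differentiableAt_slice_right hr').add_const (F t))
    (by simpa only [gradient_add_const] using differentiableAt_gradient (hrx t ht).contDiffAt)
  simp only [gradient_add_const, hres, mul_zero, zero_add, deriv_fun_add hrt hFt] at key
  have hlap : lap (r t) x = divergence ℝ (∇ (r t)) x := rfl
  refine key.trans ?_
  rw [hlap]
  ring
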